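/- arXiv:2411.12661 — 2 statements merged into one kernel-verified Lean document; each statement's English description precedes it below -/
import Mathlib

section
/- Let p be a prime number and let R be a commutative ring in which the element p is nilpotent. Then the Laurent series (1 + T)^p − 1 is a unit of R((T)). -/
/-- Let `p` be a prime number and `R` a commutative ring in which `p`
is nilpotent.  Then the Laurent series `(1 + T)^p - 1` is a unit of `R((T))`, where `T`
denotes the Laurent series `single 1 1`. -/
theorem LaurentSeries.isUnit_one_add_T_pow_p_sub_one
    (p : ℕ) (hp : p.Prime) (R : Type*) [CommRing R] (h : IsNilpotent (p : R)) :
    IsUnit ((1 + HahnSeries.single (1 : ℤ) (1 : R)) ^ p - 1 : LaurentSeries R) := by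
  obtain ⟨r, hr⟩ := exists_add_pow_prime_eq hp (1 : LaurentSeries R) (HahnSeries.single 1 1)
  set T : LaurentSeries R := HahnSeries.single 1 1 with hT
  have hT_unit : IsUnit T :=
    IsUnit.of_mul_eq_one (HahnSeries.single (-1) 1) (by
      simp [hT, HahnSeries.single_mul_single])
  have hp_nil : IsNilpotent (p : LaurentSeries R) := by
    simpa using h.map (HahnSeries.C : R →+* LaurentSeries R)
  have hsplit : (1 + T) ^ p - 1 = T ^ p + p * (T * r) := by
    rw [hr]; ring
  rw [hsplit]
  exact ((Commute.all _ _).isNilpotent_mul_right hp_nil).isUnit_add_left_of_commute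
    (hT_unit.pow p) (Commute.all _ _)
end

section
/- Let A be a Noetherian integral domain and let f : M → N be an A-linear map of finitely generated A-modules. Then there exists a nonzero element g ∈ A such that for every field κ equipped with an A-algebra structure in which the image of g is nonzero, the canonical κ-linear map ker(f) ⊗_A κ → M ⊗_A κ induced by the inclusion ker(f) ⊆ M is injective; equivalently, the canonical map ker(f) ⊗_A κ → ker(f ⊗_A κ : M ⊗_A κ → N ⊗_A κ) is injective. -/
universe u v

/-- Over a Noetherian domain, the inclusion of a submodule of a finitely generated module
splits after inverting a single nonzero element. -/
theorem Submodule.exists_comp_subtype_eq_smul_id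
    {A M : Type*} [CommRing A] [IsDomain A] [IsNoetherianRing A]
    [AddCommGroup M] [Module A M] [Module.Finite A M] (P : Submodule A M) :
    ∃ g : A, g ≠ 0 ∧ ∃ s : M →ₗ[A] P, s ∘ₗ P.subtype = g • LinearMap.id := by
  let S := nonZeroDivisors A
  let ι : LocalizedModule S P →ₗ[FractionRing A] LocalizedModule S M :=
    LocalizedModule.map S P.subtype
  have ι_injective : Function.Injective ι :=
    LocalizedModule.map_injective S P.subtype P.injective_subtype
  obtain ⟨r, hr⟩ := ι.exists_leftInverse_of_injective (LinearMap.ker_eq_bot.mpr ι_injective)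
  have : Module.FinitePresentation A M := Module.finitePresentation_of_finite A M
  obtain ⟨s, a, hs⟩ := Module.FinitePresentation.exists_lift_of_isLocalizedModule S
    (LocalizedModule.mkLinearMap S P)
    (r.restrictScalars A ∘ₗ LocalizedModule.mkLinearMap S M)
  have hcomp : LocalizedModule.mkLinearMap S P ∘ₗ (s ∘ₗ P.subtype) =
      LocalizedModule.mkLinearMap S P ∘ₗ ((a : A) • LinearMap.id) := by
    ext x
    have hx : r (LocalizedModule.mkLinearMap S M x) = LocalizedModule.mkLinearMap S P x := by
      simpa [ι] using LinearMap.congr_fun hr (LocalizedModule.mkLinearMap S P x)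
    have hsx : LocalizedModule.mkLinearMap S P (s x) =
        (a : A) • r (LocalizedModule.mkLinearMap S M x) := LinearMap.congr_fun hs (x : M)
    rw [hx, ← map_smul] at hsx
    exact hsx
  obtain ⟨b, hb⟩ := Module.Finite.exists_smul_of_comp_eq_of_isLocalizedModule S
    (LocalizedModule.mkLinearMap S P) _ _ hcomp
  refine ⟨b * a, mul_ne_zero (nonZeroDivisors.coe_ne_zero b) (nonZeroDivisors.coe_ne_zero a),
    (b : A) • s, ?_⟩
  rw [LinearMap.smul_comp, mul_smul]
  exact hb

/-- Let `A` be a Noetherian integral domain and `f : M → N` an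
`A`-linear map of finitely generated `A`-modules.  Then there is a nonzero `g ∈ A` such
that for every field `κ` with an `A`-algebra structure in which the image of `g` is
nonzero, the canonical `κ`-linear map `ker f ⊗_A κ → M ⊗_A κ` induced by the inclusion
`ker f ⊆ M` (equivalently, the map `ker f ⊗_A κ → ker (f ⊗_A κ)`) is injective. -/
theorem generic_baseChange_ker_injective
    {A : Type u} [CommRing A] [IsDomain A] [IsNoetherianRing A]
    {M N : Type u} [AddCommGroup M] [Module A M] [AddCommGroup N] [Module A N]
    [Module.Finite A M] [Module.Finite A N] (f : M →ₗ[A] N) :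
    ∃ g : A, g ≠ 0 ∧ ∀ (κ : Type v) [Field κ] [Algebra A κ],
      algebraMap A κ g ≠ 0 →
        Function.Injective (LinearMap.baseChange κ (LinearMap.ker f).subtype) := by
  obtain ⟨g, hg, s, hs⟩ := (LinearMap.ker f).exists_comp_subtype_eq_smul_id
  refine ⟨g, hg, fun κ _ _ hκ ↦ ?_⟩
  have hcomp : s.baseChange κ ∘ₗ (LinearMap.ker f).subtype.baseChange κ =
      algebraMap A κ g • LinearMap.id := by
    rw [← LinearMap.baseChange_comp, hs, LinearMap.baseChange_smul, LinearMap.baseChange_id,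
      algebraMap_smul]
  refine Function.Injective.of_comp (f := s.baseChange κ) ?_
  rw [← LinearMap.coe_comp, hcomp]
  exact smul_right_injective _ hκ
end
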